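/- As x ↓ 0, g_θ(1-x) = 1 - x + sqrt(2) x^{3/2} + O(x^2). -/

import Mathlib

/-!
Put `s = √((8 + x) / x)`, so that `8 = x (s - 1) (s + 1)` while the denominator of `gθ (1 - x)` is
`(s + 2)² - 1 = (s + 1) (s + 3)`. Hence `gθ (1 - x) = 1 - x + 4 x / (s + 3)` exactly. With
`t = √x` and `r = √(8 + t²)` one has `s = r / t`, and the error term becomes
`t³ (4 - √2 r - 3 √2 t) / (r + 3 t)`. Since `4 ≤ √2 r ≤ 4 + 2 t` and `r ≥ 2`, it is at most `4 t⁴ = 4 x²`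
in absolute value, for every `x > 0`.
-/

open Filter Set Asymptotics

noncomputable def gθ : ℝ → ℝ :=
  fun y => 1 - 8 / ((Real.sqrt ((9 - y) / (1 - y)) + 2) ^ 2 - 1)

/-- The exact form of `gθ` near `1`, in the variable `t = √x`. -/
lemma gθ_one_sub_sq {t : ℝ} (ht : 0 < t) :
    gθ (1 - t ^ 2) = 1 - t ^ 2 + 4 * t ^ 3 / (Real.sqrt (8 + t ^ 2) + 3 * t) := by
  have hs : Real.sqrt ((9 - (1 - t ^ 2)) / (1 - (1 - t ^ 2))) = Real.sqrt (8 + t ^ 2) / t := by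
    rw [show (9 - (1 - t ^ 2)) / (1 - (1 - t ^ 2)) = (8 + t ^ 2) / t ^ 2 by ring_nf,
      Real.sqrt_div (by positivity), Real.sqrt_sq ht.le]
  have hr : Real.sqrt (8 + t ^ 2) ^ 2 = 8 + t ^ 2 := Real.sq_sqrt (by positivity)
  have hr0 : 0 < Real.sqrt (8 + t ^ 2) := Real.sqrt_pos.2 (by positivity)
  unfold gθ
  rw [hs]
  generalize Real.sqrt (8 + t ^ 2) = r at hr hr0
  have hden : (r / t + 2) ^ 2 - 1 = (r + t) * (r + 3 * t) / t ^ 2 := by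
    field_simp
    ring
  rw [hden]
  field_simp
  linear_combination t ^ 2 * hr

/-- The error bound, in the variable `t = √x`. -/
lemma abs_gθ_error_le {t : ℝ} (ht : 0 < t) :
    |gθ (1 - t ^ 2) - (1 - t ^ 2 + Real.sqrt 2 * t ^ 3)| ≤ 4 * t ^ 4 := by
  have hr : Real.sqrt (8 + t ^ 2) ^ 2 = 8 + t ^ 2 := Real.sq_sqrt (by positivity)
  have hr0 : 0 ≤ Real.sqrt (8 + t ^ 2) := Real.sqrt_nonneg _
  have hw : Real.sqrt 2 ^ 2 = 2 := Real.sq_sqrt (by norm_num)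
  have hw0 : 0 ≤ Real.sqrt 2 := Real.sqrt_nonneg _
  rw [gθ_one_sub_sq ht]
  generalize Real.sqrt (8 + t ^ 2) = r at hr hr0
  generalize Real.sqrt 2 = w at hw hw0
  have hr2 : 2 ≤ r := by nlinarith
  have hw2 : w ≤ 2 := by nlinarith
  have hwr : (w * r) ^ 2 = 16 + 2 * t ^ 2 := by rw [mul_pow, hw, hr]; ring
  have h1 : 4 ≤ w * r := abs_le_of_sq_le_sq' (by nlinarith) (by positivity) |>.2
  have h2 : w * r ≤ 4 + 2 * t := abs_le_of_sq_le_sq' (by nlinarith) (by positivity) |>.2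
  have hden : 0 < r + 3 * t := by positivity
  have hnum : |4 - w * r - 3 * w * t| ≤ 8 * t := by
    rw [abs_le]
    constructor <;> nlinarith [mul_nonneg hw0 ht.le, mul_le_mul_of_nonneg_right hw2 ht.le]
  have key : 1 - t ^ 2 + 4 * t ^ 3 / (r + 3 * t) - (1 - t ^ 2 + w * t ^ 3)
      = t ^ 3 * (4 - w * r - 3 * w * t) / (r + 3 * t) := by
    field_simp
    ring
  rw [key, abs_div, abs_mul, abs_of_pos hden, abs_of_pos (pow_pos ht 3), div_le_iff₀ hden]
  calc t ^ 3 * |4 - w * r - 3 * w * t| ≤ t ^ 3 * (8 * t) := by gcongr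
    _ = 4 * t ^ 4 * 2 := by ring
    _ ≤ 4 * t ^ 4 * (r + 3 * t) := by gcongr; linarith

theorem gθ_expansion_near_one :
    (fun x : ℝ => gθ (1 - x) - (1 - x + Real.sqrt 2 * x ^ ((3 : ℝ) / 2)))
      =O[nhdsWithin 0 (Set.Ioi (0 : ℝ))] (fun x : ℝ => x ^ 2) := by
  refine IsBigO.of_bound 4 ?_
  filter_upwards [self_mem_nhdsWithin] with x hx
  have hx0 : 0 < x := hx
  have hsq : Real.sqrt x ^ 2 = x := Real.sq_sqrt hx0.le
  have hpow : x ^ ((3 : ℝ) / 2) = Real.sqrt x ^ 3 := by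
    rw [Real.sqrt_eq_rpow, ← Real.rpow_natCast, ← Real.rpow_mul hx0.le]
    norm_num
  have h := abs_gθ_error_le (Real.sqrt_pos.2 hx0)
  rw [show Real.sqrt x ^ 4 = (Real.sqrt x ^ 2) ^ 2 by ring, hsq] at h
  rw [hpow, Real.norm_eq_abs, Real.norm_eq_abs, abs_of_nonneg (sq_nonneg x)]
  exact h
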